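/- Let ω ∈ ℝ^ℤ be non-resonant and H = D_ω + Z + R with Z ∈ 𝓚 ∩ 𝓕^{≥2}, R ∈ 𝓕^{≥d}, d ≥ 1, and let Z_H ∈ 𝓚 be its unique Birkhoff normal form. If for some G ∈ 𝓕^{≥1} one has e^{{G,·}} H = D_ω + Z' + R' with Z' ∈ 𝓚 and R' ∈ 𝓕^{≥d₁}, then Z' − Z_H ∈ 𝓚 ∩ 𝓕^{≥d₁}. -/

import Mathlib

open scoped BigOperators ENNReal

/-- The index set `ℕ^ℤ_f`: finitely supported functions `ℤ → ℕ`. -/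
abbrev Idx : Type := ℤ →₀ ℕ

/-- Coefficient families of formal Hamiltonians. -/
abbrev Coeffs : Type := Idx → Idx → ℂ

/-- `|α| = ∑_j α_j`. -/
def wt (α : Idx) : ℕ := α.sum fun _ n => n

/-- The momentum `π(α,β) = ∑_j j (α_j - β_j)`. -/
def mom (α β : Idx) : ℤ := (α.sum fun j n => j * (n : ℤ)) - (β.sum fun j n => j * (n : ℤ))

/-- Membership in the space `𝓕` of formal Hamiltonians: vanishing of the
constant and linear coefficients, reality and momentum conservation. -/
def InF (H : Coeffs) : Prop :=
  H 0 0 = 0 ∧ H (Finsupp.single 0 1) 0 = 0 ∧ H 0 (Finsupp.single 0 1) = 0 ∧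
    (∀ α β, H α β = (starRingEnd ℂ) (H β α)) ∧ (∀ α β, mom α β ≠ 0 → H α β = 0)

/-- Membership in `𝓕^{≥d}`: supported on pairs with `|α|+|β| ≥ d+2`. -/
def InFge (d : ℕ) (H : Coeffs) : Prop :=
  InF H ∧ ∀ α β, wt α + wt β < d + 2 → H α β = 0

/-- Membership in `𝓚`: supported on the diagonal `{α = β}`. -/
def InK (H : Coeffs) : Prop := InF H ∧ ∀ α β, α ≠ β → H α β = 0

/-- Membership in `𝓡`: supported off the diagonal. -/
def InR (H : Coeffs) : Prop := InF H ∧ ∀ α, H α α = 0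

/-- A single term of the Poisson-bracket double sum `{F,G}_{α,β}`, indexed by
`x = (j, ((α¹,β¹), (α²,β²)))`: it is
`F_{α¹,β¹} G_{α²,β²} (α¹_j β²_j − β¹_j α²_j)` when `π(α¹,β¹) = π(α²,β²) = 0`,
`α = α¹+α²−e_j` and `β = β¹+β²−e_j`, and `0` otherwise. -/
noncomputable def bracketTerm (F G : Coeffs) (α β : Idx)
    (x : ℤ × (Idx × Idx) × (Idx × Idx)) : ℂ :=
  if mom x.2.1.1 x.2.1.2 = 0 ∧ mom x.2.2.1 x.2.2.2 = 0 ∧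
      α = x.2.1.1 + x.2.2.1 - Finsupp.single x.1 1 ∧
      β = x.2.1.2 + x.2.2.2 - Finsupp.single x.1 1 then
    F x.2.1.1 x.2.1.2 * G x.2.2.1 x.2.2.2 *
      ((x.2.1.1 x.1 : ℂ) * (x.2.2.2 x.1 : ℂ) - (x.2.1.2 x.1 : ℂ) * (x.2.2.1 x.1 : ℂ))
  else 0

/-- The Poisson bracket `{F,G}`, defined coefficientwise by
`{F,G}_{α,β} = i ∑_x bracketTerm F G α β x` (a sum with finitely many
nonzero terms, so the `finsum` gives the intended value). -/
noncomputable def bracket (F G : Coeffs) : Coeffs := fun α β =>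
  Complex.I * ∑ᶠ x : ℤ × (Idx × Idx) × (Idx × Idx), bracketTerm F G α β x

/-- Iterates `ad_G^k`. -/
noncomputable def adPow (G : Coeffs) : ℕ → Coeffs → Coeffs
  | 0, H => H
  | k + 1, H => bracket G (adPow G k H)

/-- The formal symplectic change of variables `e^{{G,·}} = ∑_{k≥0} ad_G^k / k!`;
for `G ∈ 𝓕^{≥1}` each coefficient receives only finitely many nonzero
contributions, so the `finsum` gives the intended value. -/
noncomputable def expAd (G H : Coeffs) : Coeffs := fun α β =>
  ∑ᶠ k : ℕ, ((k.factorial : ℂ))⁻¹ * adPow G k H α β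

/-- The quadratic Hamiltonian `D_ω = ∑_j ω_j |u_j|²`, whose only nonzero
coefficients are `(D_ω)_{e_j,e_j} = ω_j`. -/
noncomputable def Dom (ω : ℤ → ℝ) : Coeffs := fun α β =>
  ∑ᶠ j : ℤ, if α = Finsupp.single j 1 ∧ β = Finsupp.single j 1 then (ω j : ℂ) else 0

/-- Non-resonance: every non-trivial finite integer combination of `ω` is nonzero. -/
def NonResonant (ω : ℤ → ℝ) : Prop :=
  ∀ ℓ : ℤ →₀ ℤ, ℓ ≠ 0 → (ℓ.sum fun j c => ω j * (c : ℝ)) ≠ 0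

/-!
Let `E` be the Euler operator, multiplying a coefficient of degree `n` by `n - 2`; it is a
derivation of the Poisson bracket. The operator `Φ = e^{{G,·}} e^{-{S,·}}` maps the normal form
`D_ω + Z_H` to `D_ω + Z' + R'` and conjugates `E` to `E + {V, ·}` for some `V` of degree `≥ 3`.
Comparing off-diagonal coefficients degree by degree, `{V, D_ω}` vanishes there, so nonresonance
forces `V` to be diagonal below degree `d₁ + 2`. Diagonal families Poisson-commute, hence `Φ` fixes
`D_ω + Z_H` below that degree, where therefore `Z' = Z_H`. Below a fixed degree all the exponentials
are exponentials of nilpotent operators.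
-/

theorem sum_sum_eq_zero_of_antisymm {ι M : Type*} [AddCommGroup M] [IsAddTorsionFree M]
    (s : Finset ι) {f : ι → ι → M} (hf : ∀ i j, f i j = -f j i) :
    ∑ i ∈ s, ∑ j ∈ s, f i j = 0 := by
  refine self_eq_neg.1 ?_
  rw [← Finset.sum_neg_distrib, Finset.sum_comm]
  simp only [← Finset.sum_neg_distrib, ← hf]

/-! ### Exponentials of nilpotent elements -/

theorem exp_smul_sub_self_mem {A M : Type*} [Ring A] [Module ℚ A] [AddCommGroup M] [Module A M]
    [Module ℚ M] {a : A} (ha : IsNilpotent a) {N : Submodule ℚ M} (hN : ∀ x ∈ N, a • x ∈ N)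
    {x : M} (hx : a • x ∈ N) : IsNilpotent.exp a • x - x ∈ N := by
  have hpow (k : ℕ) : a ^ (k + 1) • x ∈ N := by
    induction k with
    | zero => simpa using hx
    | succ k ih => rw [pow_succ', mul_smul]; exact hN _ ih
  obtain ⟨k, hk⟩ := ha
  have hk' : a ^ (k + 1) • x = 0 := by rw [pow_succ', hk, mul_zero, zero_smul]
  rw [IsNilpotent.exp_smul_eq_sum hk' ⟨k, hk⟩, Finset.sum_range_succ', Nat.factorial_zero,
    Nat.cast_one, inv_one, pow_zero, one_smul, one_smul, add_sub_cancel_right]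
  exact N.sum_mem fun i _ => N.smul_mem _ (hpow i)

section Conjugation

variable {A : Type*} [Ring A] [Algebra ℚ A] {a : A}

theorem exp_mulLeft (ha : IsNilpotent a) :
    IsNilpotent.exp (LinearMap.mulLeft ℚ a) = LinearMap.mulLeft ℚ (IsNilpotent.exp a) :=
  (IsNilpotent.map_exp ha (Algebra.lmul ℚ A)).symm

theorem exp_mulRight (ha : IsNilpotent a) :
    IsNilpotent.exp (LinearMap.mulRight ℚ a) = LinearMap.mulRight ℚ (IsNilpotent.exp a) := by
  obtain ⟨k, hk⟩ := ha
  have hk' : LinearMap.mulRight ℚ a ^ k = 0 := by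
    rw [LinearMap.pow_mulRight, hk, LinearMap.mulRight_zero_eq_zero]
  ext x
  simp only [IsNilpotent.exp_eq_sum hk, IsNilpotent.exp_eq_sum hk', LinearMap.sum_apply,
    LinearMap.smul_apply, LinearMap.pow_mulRight, LinearMap.mulRight_apply, Finset.mul_sum,
    mul_smul_comm]

theorem isNilpotent_mulLeft_sub_mulRight (ha : IsNilpotent a) :
    IsNilpotent (LinearMap.mulLeft ℚ a - LinearMap.mulRight ℚ a) :=
  (LinearMap.commute_mulLeft_right a a).isNilpotent_sub
    ((LinearMap.isNilpotent_mulLeft_iff ℚ a).2 ha) ((LinearMap.isNilpotent_mulRight_iff ℚ a).2 ha)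

theorem exp_mulLeft_sub_mulRight_mul_exp (ha : IsNilpotent a) (T : A) :
    IsNilpotent.exp (LinearMap.mulLeft ℚ a - LinearMap.mulRight ℚ a) T * IsNilpotent.exp a =
      IsNilpotent.exp a * T := by
  have hR : IsNilpotent (LinearMap.mulRight ℚ a) := (LinearMap.isNilpotent_mulRight_iff ℚ a).2 ha
  have hcomm : Commute (LinearMap.mulRight ℚ a) (LinearMap.mulLeft ℚ a - LinearMap.mulRight ℚ a) :=
    (LinearMap.commute_mulLeft_right a a).symm.sub_right (.refl _)
  have hexp := IsNilpotent.exp_add_of_commute hcomm hR (isNilpotent_mulLeft_sub_mulRight ha)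
  rw [add_sub_cancel, exp_mulLeft ha, exp_mulRight ha] at hexp
  exact (LinearMap.congr_fun hexp T).symm

theorem exists_exp_mul_eq_add_mul_exp (ha : IsNilpotent a) {I : Submodule ℚ A}
    (hI : ∀ T ∈ I, a * T - T * a ∈ I) {T : A} (hT : a * T - T * a ∈ I) :
    ∃ i ∈ I, IsNilpotent.exp a * T = (T + i) * IsNilpotent.exp a := by
  let C := LinearMap.mulLeft ℚ a - LinearMap.mulRight ℚ a
  have hC : IsNilpotent C := isNilpotent_mulLeft_sub_mulRight ha
  refine ⟨IsNilpotent.exp C T - T, exp_smul_sub_self_mem hC hI hT, ?_⟩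
  rw [add_sub_cancel, exp_mulLeft_sub_mulRight_mul_exp ha]

end Conjugation

namespace Coeffs

open Finsupp (single)

/-! ### Degree, momentum and contraction of exponent pairs -/

/-- The degree `|α| + |β|` of the monomial `u^α ū^β`, encoded by the pair `(α, β)`. -/
def deg (p : Idx × Idx) : ℕ := wt p.1 + wt p.2

/-- The momentum of a single exponent, so that `mom α β = momentum α - momentum β`. -/
def momentum (α : Idx) : ℤ := α.sum fun j n => j * (n : ℤ)

/-- The exponent pair of `∂_{u_j} u^p · ∂_{ū_j} u^q`. By truncated subtraction it is meaningful
only when `contractCoeff j p q ≠ 0`. -/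
noncomputable def contract (j : ℤ) (p q : Idx × Idx) : Idx × Idx :=
  (p.1 + q.1 - single j 1, p.2 + q.2 - single j 1)

/-- The coefficient of `contract j p q` in the Poisson bracket of two monomials. -/
def contractCoeff (j : ℤ) (p q : Idx × Idx) : ℂ :=
  (p.1 j : ℂ) * (q.2 j : ℂ) - (p.2 j : ℂ) * (q.1 j : ℂ)

theorem wt_add (α β : Idx) : wt (α + β) = wt α + wt β :=
  Finsupp.sum_add_index' (fun _ => rfl) fun _ _ _ => rfl

theorem wt_single_one (j : ℤ) : wt (single j 1) = 1 :=
  Finsupp.sum_single_index rfl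

theorem momentum_add (α β : Idx) : momentum (α + β) = momentum α + momentum β :=
  Finsupp.sum_add_index' (fun _ => by simp) fun _ _ _ => by push_cast; ring

theorem momentum_single_one (j : ℤ) : momentum (single j 1) = j := by
  simp [momentum]

theorem mom_eq_sub (α β : Idx) : mom α β = momentum α - momentum β := rfl

theorem mom_self (α : Idx) : mom α α = 0 := sub_self _

theorem contract_comm (j : ℤ) (p q : Idx × Idx) : contract j p q = contract j q p := by
  simp only [contract, add_comm]

theorem contractCoeff_swap (j : ℤ) (p q : Idx × Idx) :
    contractCoeff j q p = -contractCoeff j p q := by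
  simp only [contractCoeff]; ring

theorem contractCoeff_eq_zero_of_diagonal (j : ℤ) {p q : Idx × Idx} (hp : p.1 = p.2)
    (hq : q.1 = q.2) : contractCoeff j p q = 0 := by
  simp only [contractCoeff, hp, hq]; ring

theorem mul_ne_zero_of_contractCoeff_ne_zero {j : ℤ} {p q : Idx × Idx}
    (h : contractCoeff j p q ≠ 0) : p.1 j * q.2 j ≠ 0 ∨ p.2 j * q.1 j ≠ 0 := by
  by_contra! hzero
  exact h (by simp only [contractCoeff, ← Nat.cast_mul, hzero, Nat.cast_zero, sub_zero])

section

variable {j : ℤ} {p q : Idx × Idx}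

theorem contract_fst_add_single (h : contractCoeff j p q ≠ 0) :
    (contract j p q).1 + single j 1 = p.1 + q.1 := by
  refine Finsupp.sub_add_single_one_cancel fun hsum => ?_
  simp only [Finsupp.add_apply, Nat.add_eq_zero_iff] at hsum
  simp [contractCoeff, hsum] at h

theorem contract_snd_add_single (h : contractCoeff j p q ≠ 0) :
    (contract j p q).2 + single j 1 = p.2 + q.2 := by
  refine Finsupp.sub_add_single_one_cancel fun hsum => ?_
  simp only [Finsupp.add_apply, Nat.add_eq_zero_iff] at hsum
  simp [contractCoeff, hsum] at h

theorem deg_contract (h : contractCoeff j p q ≠ 0) :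
    deg (contract j p q) + 2 = deg p + deg q := by
  have h₁ := congrArg wt (contract_fst_add_single h)
  have h₂ := congrArg wt (contract_snd_add_single h)
  simp only [wt_add, wt_single_one] at h₁ h₂
  simp only [deg]
  omega

theorem mom_contract (h : contractCoeff j p q ≠ 0) :
    mom (contract j p q).1 (contract j p q).2 = mom p.1 p.2 + mom q.1 q.2 := by
  have h₁ := congrArg momentum (contract_fst_add_single h)
  have h₂ := congrArg momentum (contract_snd_add_single h)
  simp only [momentum_add, momentum_single_one] at h₁ h₂
  simp only [mom_eq_sub]
  omega

end

/-! ### The Poisson bracket as a finite sum -/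

/-- The triples `(j, p, q)` contributing to the `(α, β)` coefficient of a Poisson bracket. -/
def contributing (α β : Idx) : Set (ℤ × (Idx × Idx) × (Idx × Idx)) :=
  {x | mom x.2.1.1 x.2.1.2 = 0 ∧ mom x.2.2.1 x.2.2.2 = 0 ∧ (α, β) = contract x.1 x.2.1 x.2.2 ∧
    contractCoeff x.1 x.2.1 x.2.2 ≠ 0}

theorem exists_eq_add_single {α β γ : Idx} {j : ℤ} (h : γ + single j 1 = α + β) (hα : α j ≠ 0) :
    ∃ σ, α = σ + single j 1 ∧ σ + β = γ := by
  refine ⟨α - single j 1, (Finsupp.sub_add_single_one_cancel hα).symm, ?_⟩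
  rw [Finsupp.sub_single_one_add hα, ← h, add_tsub_cancel_right]

/-- Momentum conservation determines the contracted mode `j` from the remaining exponents, so
these triples are parametrised by the decompositions of `α` and `β`. -/
theorem finite_setOf_contribution (α β : Idx) :
    {x : ℤ × (Idx × Idx) × (Idx × Idx) | mom x.2.1.1 x.2.1.2 = 0 ∧ ∃ σ τ,
      x.2.1.1 = σ + single x.1 1 ∧ σ + x.2.2.1 = α ∧
      x.2.2.2 = τ + single x.1 1 ∧ τ + x.2.1.2 = β}.Finite := by
  classical
  let recover (y : (Idx × Idx) × (Idx × Idx)) : ℤ × (Idx × Idx) × (Idx × Idx) :=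
    let j := momentum y.2.2 - momentum y.1.1
    (j, (y.1.1 + single j 1, y.2.2), (y.1.2, y.2.1 + single j 1))
  refine ((Finset.HasAntidiagonal.antidiagonal α ×ˢ
    Finset.HasAntidiagonal.antidiagonal β).image recover).finite_toSet.subset ?_
  rintro ⟨j, ⟨α₁, β₁⟩, ⟨α₂, β₂⟩⟩ ⟨hmom, σ, τ, hα₁, hσ, hβ₂, hτ⟩
  obtain rfl : α₁ = σ + single j 1 := hα₁
  obtain rfl : β₂ = τ + single j 1 := hβ₂
  have hj : momentum β₁ - momentum σ = j := by
    simp only [mom_eq_sub, momentum_add, momentum_single_one] at hmom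
    omega
  refine Finset.mem_coe.2 (Finset.mem_image.2 ⟨((σ, α₂), (τ, β₁)), ?_, ?_⟩)
  · simp only [Finset.mem_product, Finset.HasAntidiagonal.mem_antidiagonal]
    exact ⟨hσ, hτ⟩
  · simp only [recover, hj]

theorem contributing_finite (α β : Idx) : (contributing α β).Finite := by
  refine ((finite_setOf_contribution α β).union ((finite_setOf_contribution α β).image
    fun x => (x.1, x.2.2, x.2.1))).subset ?_
  rintro ⟨j, p, q⟩ ⟨hp, hq, hαβ, hc⟩
  obtain ⟨h₁, h₂⟩ := Prod.ext_iff.1 hαβ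
  have hfst := contract_fst_add_single hc
  have hsnd := contract_snd_add_single hc
  simp only at h₁ h₂
  rw [← h₁] at hfst
  rw [← h₂] at hsnd
  rcases mul_ne_zero_of_contractCoeff_ne_zero hc with h | h
  · obtain ⟨hp₁, hq₂⟩ := mul_ne_zero_iff.1 h
    obtain ⟨σ, hσ⟩ := exists_eq_add_single hfst hp₁
    obtain ⟨τ, hτ⟩ := exists_eq_add_single (hsnd.trans (add_comm _ _)) hq₂
    exact .inl ⟨hp, σ, τ, hσ.1, hσ.2, hτ.1, hτ.2⟩
  · obtain ⟨hp₂, hq₁⟩ := mul_ne_zero_iff.1 h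
    obtain ⟨σ, hσ⟩ := exists_eq_add_single (hfst.trans (add_comm _ _)) hq₁
    obtain ⟨τ, hτ⟩ := exists_eq_add_single hsnd hp₂
    exact .inr ⟨(j, q, p), ⟨hq, σ, τ, hσ.1, hσ.2, hτ.1, hτ.2⟩, rfl⟩

theorem bracketTerm_apply (F G : Coeffs) (α β : Idx) (j : ℤ) (p q : Idx × Idx)
    [Decidable (mom p.1 p.2 = 0 ∧ mom q.1 q.2 = 0 ∧ (α, β) = contract j p q)] :
    bracketTerm F G α β (j, p, q) =
      if mom p.1 p.2 = 0 ∧ mom q.1 q.2 = 0 ∧ (α, β) = contract j p q then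
        F p.1 p.2 * G q.1 q.2 * contractCoeff j p q else 0 := by
  simp only [bracketTerm, contract, Prod.mk.injEq, contractCoeff]

theorem bracket_apply (F G : Coeffs) (α β : Idx) :
    bracket F G α β = Complex.I * ∑ x ∈ (contributing_finite α β).toFinset,
      F x.2.1.1 x.2.1.2 * G x.2.2.1 x.2.2.2 * contractCoeff x.1 x.2.1 x.2.2 := by
  classical
  rw [bracket, finsum_eq_sum_of_support_subset (s := (contributing_finite α β).toFinset)]
  · congr 1
    refine Finset.sum_congr rfl fun ⟨j, p, q⟩ hx => ?_
    obtain ⟨hp, hq, hαβ, -⟩ := (Set.Finite.mem_toFinset _).1 hx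
    rw [bracketTerm_apply, if_pos ⟨hp, hq, hαβ⟩]
  · rintro ⟨j, p, q⟩ hx
    rw [Function.mem_support, bracketTerm_apply, ite_ne_right_iff] at hx
    obtain ⟨⟨hp, hq, hαβ⟩, hne⟩ := hx
    exact (Set.Finite.coe_toFinset _).symm ▸ ⟨hp, hq, hαβ, right_ne_zero_of_mul hne⟩

theorem deg_add_two_of_mem_contributing {α β : Idx} {x : ℤ × (Idx × Idx) × (Idx × Idx)}
    (hx : x ∈ contributing α β) : wt α + wt β + 2 = deg x.2.1 + deg x.2.2 := by
  obtain ⟨-, -, hαβ, hc⟩ := hx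
  rw [← deg_contract hc, ← hαβ, deg]

theorem bracket_apply_eq_zero {F G : Coeffs} {α β : Idx}
    (h : ∀ j p q, mom p.1 p.2 = 0 → contractCoeff j p q ≠ 0 →
      wt α + wt β + 2 = deg p + deg q → F p.1 p.2 * G q.1 q.2 = 0) :
    bracket F G α β = 0 := by
  rw [bracket_apply, Finset.sum_eq_zero, mul_zero]
  intro x hx
  replace hx := (Set.Finite.mem_toFinset _).1 hx
  rw [h x.1 x.2.1 x.2.2 hx.1 hx.2.2.2 (deg_add_two_of_mem_contributing hx), zero_mul]

/-- The Poisson bracket as a bilinear map. -/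
noncomputable def poisson : Coeffs →ₗ[ℂ] Coeffs →ₗ[ℂ] Coeffs :=
  LinearMap.mk₂ ℂ bracket
    (fun F F' G => by
      ext α β
      simp only [bracket_apply, Pi.add_apply, add_mul, Finset.sum_add_distrib, mul_add])
    (fun c F G => by
      ext α β
      simp only [bracket_apply, Pi.smul_apply, smul_eq_mul, mul_assoc, ← Finset.mul_sum]
      exact mul_left_comm _ _ _)
    (fun F G G' => by
      ext α β
      simp only [bracket_apply, Pi.add_apply, add_mul, Finset.sum_add_distrib, mul_add])
    (fun c F G => by
      ext α β
      simp only [bracket_apply, Pi.smul_apply, smul_eq_mul, mul_left_comm _ c, mul_assoc c,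
        ← Finset.mul_sum])

theorem poisson_apply (F G : Coeffs) : poisson F G = bracket F G := rfl

theorem bracket_swap (F G : Coeffs) : bracket G F = -bracket F G := by
  classical
  let swap : ℤ × (Idx × Idx) × (Idx × Idx) ≃ ℤ × (Idx × Idx) × (Idx × Idx) :=
    (Equiv.refl ℤ).prodCongr (Equiv.prodComm _ _)
  have hterm : ∀ α β x, bracketTerm G F α β (swap x) = -bracketTerm F G α β x := by
    rintro α β ⟨j, p, q⟩
    change bracketTerm G F α β (j, q, p) = _
    rw [bracketTerm_apply, bracketTerm_apply, contract_comm j q p, contractCoeff_swap j p q,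
      mul_comm (G _ _), mul_neg, apply_ite Neg.neg, neg_zero]
    exact if_congr and_left_comm rfl rfl
  ext α β
  simp only [bracket, Pi.neg_apply]
  rw [← finsum_comp_equiv swap, finsum_congr (hterm α β), finsum_neg_distrib, mul_neg]

/-! ### Monomials and the Jacobi identity -/

/-- The monomial `u^α ū^β`, encoded by `p = (α, β)`. -/
noncomputable def monomial (p : Idx × Idx) : Coeffs :=
  Pi.single p.1 (Pi.single p.2 1)

open Classical in
theorem monomial_apply (p : Idx × Idx) (α β : Idx) :
    monomial p α β = if (α, β) = p then 1 else 0 := by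
  by_cases h : α = p.1
  · subst h
    simp [monomial, Pi.single_apply, Prod.ext_iff]
  · simp [monomial, h, Prod.ext_iff]

theorem hasSum_smul_monomial (F : Coeffs) :
    HasSum (fun p : Idx × Idx => F p.1 p.2 • monomial p) F := by
  classical
  refine Pi.hasSum.2 fun α => Pi.hasSum.2 fun β => ?_
  convert hasSum_single (α, β) fun p hp => ?_
  · simp [monomial_apply]
  · simp [monomial_apply, hp.symm]

theorem eq_zero_of_forall_monomial {A : Coeffs →ₗ[ℂ] Coeffs} (hA : Continuous A)
    (h : ∀ p, A (monomial p) = 0) : A = 0 := by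
  ext1 F
  refine ((hasSum_smul_monomial F).map A hA).unique ?_
  simp only [Function.comp_def, map_smul, h, smul_zero]
  exact hasSum_zero

@[fun_prop]
theorem continuous_bracket {X : Type*} [TopologicalSpace X] {f g : X → Coeffs}
    (hf : Continuous f) (hg : Continuous g) : Continuous fun x => bracket (f x) (g x) := by
  refine continuous_pi fun α => continuous_pi fun β => ?_
  simp only [bracket_apply]
  fun_prop

theorem bracket_monomial_left_eq_zero {p : Idx × Idx} (hp : mom p.1 p.2 ≠ 0) (F : Coeffs) :
    bracket (monomial p) F = 0 := by
  classical
  ext α β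
  refine bracket_apply_eq_zero fun j p' q' hmom _ _ => ?_
  have hne : p' ≠ p := fun h => hp (h ▸ hmom)
  rw [monomial_apply, if_neg hne, zero_mul]

theorem bracket_monomial_right_eq_zero {p : Idx × Idx} (hp : mom p.1 p.2 ≠ 0) (F : Coeffs) :
    bracket F (monomial p) = 0 := by
  rw [bracket_swap, bracket_monomial_left_eq_zero hp, neg_zero]

/-- The modes occurring in the monomial with exponent pair `p`. -/
def modes (p : Idx × Idx) : Finset ℤ := p.1.support ∪ p.2.support

theorem contractCoeff_eq_zero_of_notMem_modes {j : ℤ} {p : Idx × Idx} (hj : j ∉ modes p)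
    (q : Idx × Idx) : contractCoeff j p q = 0 := by
  simp only [modes, Finset.mem_union, Finsupp.mem_support_iff, not_or, not_not] at hj
  simp only [contractCoeff, hj, Nat.cast_zero, zero_mul, sub_zero]

theorem bracket_monomial {p q : Idx × Idx} (hp : mom p.1 p.2 = 0) (hq : mom q.1 q.2 = 0)
    {J : Finset ℤ} (hJ : modes p ⊆ J) :
    bracket (monomial p) (monomial q) =
      ∑ j ∈ J, (Complex.I * contractCoeff j p q) • monomial (contract j p q) := by
  classical
  ext α β
  have hsupp : (Function.support (bracketTerm (monomial p) (monomial q) α β)) ⊆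
      (J.image fun j => (j, p, q) : Finset _) := by
    rintro ⟨j, p', q'⟩ hx
    rw [Function.mem_support, bracketTerm_apply, ite_ne_right_iff] at hx
    obtain ⟨-, hne⟩ := hx
    obtain ⟨hpq, hc⟩ := mul_ne_zero_iff.1 hne
    simp only [monomial_apply, mul_ne_zero_iff, ite_ne_right_iff] at hpq
    obtain ⟨⟨rfl, -⟩, rfl, -⟩ := hpq
    exact Finset.mem_coe.2 (Finset.mem_image_of_mem _ (hJ (by_contra fun hj =>
      hc (contractCoeff_eq_zero_of_notMem_modes hj _))))
  rw [bracket, finsum_eq_sum_of_support_subset _ hsupp,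
    Finset.sum_image fun _ _ _ _ h => congrArg Prod.fst h, Finset.mul_sum, Finset.sum_apply,
    Finset.sum_apply]
  refine Finset.sum_congr rfl fun j _ => ?_
  simp [bracketTerm_apply, monomial_apply, hp, hq]

/-- In the bracket with `u^q u^r / |u_k|²`, the Leibniz rule holds up to the contribution of the
factor `1 / |u_k|²`. -/
theorem contractCoeff_contract (j k : ℤ) (p : Idx × Idx) {q r : Idx × Idx}
    (h : contractCoeff k q r ≠ 0) :
    contractCoeff j p (contract k q r) = contractCoeff j p q + contractCoeff j p r -
      if j = k then (p.1 j : ℂ) - p.2 j else 0 := by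
  have h₁ := congrArg (Nat.cast (R := ℂ)) (DFunLike.congr_fun (contract_fst_add_single h) j)
  have h₂ := congrArg (Nat.cast (R := ℂ)) (DFunLike.congr_fun (contract_snd_add_single h) j)
  simp only [Finsupp.add_apply, Finsupp.single_apply, Nat.cast_add, Nat.cast_ite, Nat.cast_one,
    Nat.cast_zero, eq_comm (a := k)] at h₁ h₂
  simp only [contractCoeff, eq_sub_of_add_eq h₁, eq_sub_of_add_eq h₂]
  split_ifs <;> ring

theorem contract_contract (j : ℤ) {k : ℤ} (p : Idx × Idx) {q r : Idx × Idx}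
    (h : contractCoeff k q r ≠ 0) :
    contract j p (contract k q r) = (p.1 + q.1 + r.1 - single k 1 - single j 1,
      p.2 + q.2 + r.2 - single k 1 - single j 1) := by
  have h₁ : single k 1 ≤ q.1 + r.1 := le_add_self.trans_eq (contract_fst_add_single h)
  have h₂ : single k 1 ≤ q.2 + r.2 := le_add_self.trans_eq (contract_snd_add_single h)
  simp only [contract, add_assoc, add_tsub_assoc_of_le h₁, add_tsub_assoc_of_le h₂]

theorem bracket_bracket_monomial {p q r : Idx × Idx} (hp : mom p.1 p.2 = 0)
    (hq : mom q.1 q.2 = 0) (hr : mom r.1 r.2 = 0) {J : Finset ℤ} (hpJ : modes p ⊆ J)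
    (hqJ : modes q ⊆ J) :
    bracket (monomial p) (bracket (monomial q) (monomial r)) = ∑ k ∈ J, ∑ j ∈ J,
      (-(contractCoeff k q r * (contractCoeff j p q + contractCoeff j p r -
        if j = k then (p.1 j : ℂ) - p.2 j else 0))) •
      monomial (p.1 + q.1 + r.1 - single k 1 - single j 1,
        p.2 + q.2 + r.2 - single k 1 - single j 1) := by
  rw [bracket_monomial hq hr hqJ, ← poisson_apply, map_sum]
  refine Finset.sum_congr rfl fun k _ => ?_
  by_cases h : contractCoeff k q r = 0
  · simp [h]
  have hmom : mom (contract k q r).1 (contract k q r).2 = 0 := by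
    rw [mom_contract h, hq, hr, add_zero]
  rw [map_smul, poisson_apply, bracket_monomial hp hmom hpJ, Finset.smul_sum]
  refine Finset.sum_congr rfl fun j _ => ?_
  rw [smul_smul, contract_contract j p h, contractCoeff_contract j k p h]
  congr 1
  linear_combination (contractCoeff k q r * (contractCoeff j p q + contractCoeff j p r -
    if j = k then (p.1 j : ℂ) - p.2 j else 0)) * Complex.I_mul_I

theorem jacobi_monomial (p q r : Idx × Idx) :
    bracket (monomial p) (bracket (monomial q) (monomial r)) +
      bracket (monomial q) (bracket (monomial r) (monomial p)) +
      bracket (monomial r) (bracket (monomial p) (monomial q)) = 0 := by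
  classical
  have bracket_zero (F : Coeffs) : bracket F 0 = 0 := (poisson F).map_zero
  by_cases hp : mom p.1 p.2 = 0
  case neg =>
    simp [bracket_monomial_left_eq_zero hp, bracket_monomial_right_eq_zero hp, bracket_zero]
  by_cases hq : mom q.1 q.2 = 0
  case neg =>
    simp [bracket_monomial_left_eq_zero hq, bracket_monomial_right_eq_zero hq, bracket_zero]
  by_cases hr : mom r.1 r.2 = 0
  case neg =>
    simp [bracket_monomial_left_eq_zero hr, bracket_monomial_right_eq_zero hr, bracket_zero]
  let J := modes p ∪ modes q ∪ modes r
  have hpJ : modes p ⊆ J := Finset.subset_union_left.trans Finset.subset_union_left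
  have hqJ : modes q ⊆ J := Finset.subset_union_right.trans Finset.subset_union_left
  have hrJ : modes r ⊆ J := Finset.subset_union_right
  rw [bracket_bracket_monomial hp hq hr hpJ hqJ, bracket_bracket_monomial hq hr hp hqJ hrJ,
    bracket_bracket_monomial hr hp hq hrJ hpJ, ← add_rotate p.1 q.1,
    ← add_rotate p.2 q.2, add_rotate r.1, add_rotate r.2]
  simp only [← Finset.sum_add_distrib, ← add_smul]
  refine sum_sum_eq_zero_of_antisymm J fun k j => ?_
  rw [tsub_right_comm (a := p.1 + q.1 + r.1), tsub_right_comm (a := p.2 + q.2 + r.2), ← neg_smul]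
  congr 1
  by_cases hjk : j = k
  · subst hjk
    simp only [if_true, contractCoeff]
    ring
  · simp only [if_neg hjk, if_neg (Ne.symm hjk), contractCoeff]
    ring

theorem jacobi (F G H : Coeffs) :
    bracket F (bracket G H) + bracket G (bracket H F) + bracket H (bracket F G) = 0 := by
  have extend (G H : Coeffs) (h : ∀ p, bracket (monomial p) (bracket G H) +
      bracket G (bracket H (monomial p)) + bracket H (bracket (monomial p) G) = 0) (F : Coeffs) :
      bracket F (bracket G H) + bracket G (bracket H F) + bracket H (bracket F G) = 0 := by
    let A : Coeffs →ₗ[ℂ] Coeffs := poisson.flip (bracket G H) + poisson G ∘ₗ poisson H +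
      poisson H ∘ₗ poisson.flip G
    have hA : Continuous A := by
      change Continuous fun F => bracket F (bracket G H) + bracket G (bracket H F) +
        bracket H (bracket F G)
      fun_prop
    exact LinearMap.congr_fun (eq_zero_of_forall_monomial hA h) F
  refine extend G H (fun p => ?_) F
  rw [add_rotate]
  refine extend H (monomial p) (fun q => ?_) G
  rw [add_rotate]
  refine extend (monomial p) (monomial q) (fun r => ?_) H
  rw [add_rotate]
  exact jacobi_monomial p q r

theorem leibniz_bracket (F G H : Coeffs) :
    bracket F (bracket G H) = bracket (bracket F G) H + bracket G (bracket F H) := by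
  have hGHF : bracket G (bracket H F) = -bracket G (bracket F H) := by
    rw [bracket_swap F H]
    exact (poisson G).map_neg _
  linear_combination jacobi F G H - hGHF - bracket_swap H (bracket F G)

/-! ### The degree filtration and the diagonal -/

/-- The families supported in degree `≥ n`, so that `𝓕^{≥d} = 𝓕 ∩ degGE (d + 2)`. -/
def degGE (n : ℕ) : Submodule ℂ Coeffs where
  carrier := {F | ∀ α β, wt α + wt β < n → F α β = 0}
  add_mem' hF hG α β h := by rw [Pi.add_apply, Pi.add_apply, hF α β h, hG α β h, add_zero]
  zero_mem' _ _ _ := rfl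
  smul_mem' c F hF α β h := by rw [Pi.smul_apply, Pi.smul_apply, hF α β h, smul_zero]

/-- The families supported on pairs `(α, α)`, so that `𝓚 = 𝓕 ∩ diagonal`. -/
def diagonal : Submodule ℂ Coeffs where
  carrier := {F | ∀ α β, α ≠ β → F α β = 0}
  add_mem' hF hG α β h := by rw [Pi.add_apply, Pi.add_apply, hF α β h, hG α β h, add_zero]
  zero_mem' _ _ _ := rfl
  smul_mem' c F hF α β h := by rw [Pi.smul_apply, Pi.smul_apply, hF α β h, smul_zero]

/-- The zero-momentum coefficients of `V` in degree `< n` lie on the diagonal. -/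
def DiagonalBelow (n : ℕ) (V : Coeffs) : Prop :=
  ∀ α β, wt α + wt β < n → mom α β = 0 → α ≠ β → V α β = 0

theorem degGE_antitone : Antitone degGE :=
  fun _ _ h _ hF α β hαβ => hF α β (hαβ.trans_le h)

theorem bracket_mem_degGE {m n : ℕ} {F G : Coeffs} (hF : F ∈ degGE (m + 2)) (hG : G ∈ degGE n) :
    bracket F G ∈ degGE (m + n) := by
  refine fun α β h => bracket_apply_eq_zero fun j p q _ _ hdeg => ?_
  rcases lt_or_ge (deg p) (m + 2) with hp | hp
  · rw [hF _ _ hp, zero_mul]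
  · have hq : deg q < n := by omega
    rw [hG _ _ hq, mul_zero]

theorem bracket_mem_degGE_of_diagonalBelow {m s : ℕ} {V x : Coeffs} (hV : DiagonalBelow (m + 2) V)
    (hx : x ∈ diagonal) (hxs : x ∈ degGE s) : bracket V x ∈ degGE (m + s) := by
  refine fun α β h => bracket_apply_eq_zero fun j p q hmom hc hdeg => ?_
  by_cases hq : q.1 = q.2
  · rcases lt_or_ge (deg q) s with hqs | hqs
    · rw [hxs _ _ hqs, mul_zero]
    · have hp : deg p < m + 2 := by omega
      rw [hV _ _ hp hmom fun hp => hc (contractCoeff_eq_zero_of_diagonal j hp hq), zero_mul]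
  · rw [hx _ _ hq, mul_zero]

/-- The Euler operator, acting on coefficients of degree `n` as multiplication by `n - 2`; with
this shift it is a derivation of the Poisson bracket. -/
noncomputable def euler : Module.End ℂ Coeffs where
  toFun F := fun α β => (((wt α + wt β : ℕ) : ℂ) - 2) * F α β
  map_add' F G := by ext α β; exact mul_add _ _ _
  map_smul' c F := by ext α β; exact mul_left_comm _ _ _

theorem euler_apply (F : Coeffs) (α β : Idx) :
    euler F α β = (((wt α + wt β : ℕ) : ℂ) - 2) * F α β := rfl

theorem euler_mem_degGE {n : ℕ} {F : Coeffs} (hF : F ∈ degGE n) : euler F ∈ degGE n :=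
  fun α β h => by rw [euler_apply, hF α β h, mul_zero]

theorem euler_bracket (F G : Coeffs) :
    euler (bracket F G) = bracket (euler F) G + bracket F (euler G) := by
  ext α β
  rw [euler_apply, Pi.add_apply, Pi.add_apply, bracket_apply, bracket_apply, bracket_apply,
    ← mul_add, ← Finset.sum_add_distrib, mul_left_comm, Finset.mul_sum]
  congr 1
  refine Finset.sum_congr rfl fun x hx => ?_
  have hdeg := congrArg (Nat.cast (R := ℂ))
    (deg_add_two_of_mem_contributing ((Set.Finite.mem_toFinset _).1 hx))
  simp only [euler_apply, deg, Nat.cast_add, Nat.cast_ofNat] at hdeg ⊢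
  linear_combination (F x.2.1.1 x.2.1.2 * G x.2.2.1 x.2.2.2 *
    contractCoeff x.1 x.2.1 x.2.2) * hdeg

/-! ### The truncated adjoint action -/

/-- Truncation to the coefficients of degree `< M`. -/
noncomputable def truncate (M : ℕ) : Module.End ℂ Coeffs where
  toFun F := fun α β => if wt α + wt β < M then F α β else 0
  map_add' F G := by ext α β; simp only [Pi.add_apply]; split_ifs <;> simp
  map_smul' c F := by ext α β; simp only [Pi.smul_apply]; split_ifs <;> simp

theorem truncate_apply (M : ℕ) (F : Coeffs) (α β : Idx) :
    truncate M F α β = if wt α + wt β < M then F α β else 0 := rfl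

theorem truncate_sub_mem_degGE (M : ℕ) (F : Coeffs) : truncate M F - F ∈ degGE M :=
  fun α β h => by rw [Pi.sub_apply, Pi.sub_apply, truncate_apply, if_pos h, sub_self]

theorem truncate_mem_degGE (M : ℕ) {n : ℕ} {F : Coeffs} (hF : F ∈ degGE n) :
    truncate M F ∈ degGE n :=
  fun α β h => by rw [truncate_apply, hF α β h, ite_self]

theorem truncate_eq_zero {M : ℕ} {F : Coeffs} (hF : F ∈ degGE M) : truncate M F = 0 := by
  ext α β
  exact ite_eq_right_iff.2 (hF α β)

theorem euler_truncate (M : ℕ) (F : Coeffs) : euler (truncate M F) = truncate M (euler F) := by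
  ext α β
  simp only [euler_apply, truncate_apply, mul_ite, mul_zero]

/-- The adjoint action `{X, ·}` truncated to degrees `< M`, which makes it nilpotent for
`X ∈ degGE 3`. -/
noncomputable def adTrunc (M : ℕ) : Coeffs →ₗ[ℂ] Module.End ℂ Coeffs :=
  (LinearMap.llcomp ℂ Coeffs Coeffs Coeffs (truncate M)) ∘ₗ poisson

theorem adTrunc_apply (M : ℕ) (X F : Coeffs) : adTrunc M X F = truncate M (bracket X F) := rfl

variable {M : ℕ} {X Y : Coeffs}

theorem adTrunc_mem_degGE {n : ℕ} {F : Coeffs} (hX : X ∈ degGE 3) (hF : F ∈ degGE n) :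
    adTrunc M X F ∈ degGE (n + 1) :=
  truncate_mem_degGE M (add_comm 1 n ▸ bracket_mem_degGE hX hF)

theorem adTrunc_truncate (hX : X ∈ degGE 3) (F : Coeffs) :
    adTrunc M X (truncate M F) = adTrunc M X F := by
  rw [← sub_eq_zero, ← map_sub]
  exact truncate_eq_zero (degGE_antitone (Nat.le_add_left M 1)
    (bracket_mem_degGE hX (truncate_sub_mem_degGE M F)))

theorem adTrunc_commutator (hX : X ∈ degGE 3) (hY : Y ∈ degGE 3) :
    adTrunc M X * adTrunc M Y - adTrunc M Y * adTrunc M X = adTrunc M (bracket X Y) := by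
  ext1 F
  calc adTrunc M X (truncate M (bracket Y F)) - adTrunc M Y (truncate M (bracket X F))
      = truncate M (bracket X (bracket Y F)) - truncate M (bracket Y (bracket X F)) := by
        rw [adTrunc_truncate hX, adTrunc_truncate hY, adTrunc_apply, adTrunc_apply]
    _ = truncate M (bracket (bracket X Y) F) := by
        rw [← map_sub, leibniz_bracket, add_sub_cancel_right]

theorem adTrunc_euler_commutator (M : ℕ) (X : Coeffs) :
    adTrunc M X * euler - euler * adTrunc M X = -adTrunc M (euler X) := by
  ext1 F
  change truncate M (bracket X (euler F)) - euler (truncate M (bracket X F)) =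
    -truncate M (bracket (euler X) F)
  rw [euler_truncate, euler_bracket, map_add]
  abel

theorem adTrunc_pow_mem_degGE (hX : X ∈ degGE 3) (k : ℕ) (F : Coeffs) :
    (adTrunc M X ^ k) F ∈ degGE k := by
  induction k with
  | zero => exact fun _ _ h => absurd h (Nat.not_lt_zero _)
  | succ k ih =>
    rw [pow_succ', Module.End.mul_apply]
    exact adTrunc_mem_degGE hX ih

theorem adTrunc_pow_eq_zero (hX : X ∈ degGE 3) : adTrunc M X ^ (M + 1) = 0 := by
  ext1 F
  rw [pow_succ', Module.End.mul_apply, adTrunc_apply]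
  exact truncate_eq_zero (degGE_antitone (Nat.le_add_left M 1)
    (bracket_mem_degGE hX (adTrunc_pow_mem_degGE hX M F)))

theorem isNilpotent_adTrunc (hX : X ∈ degGE 3) : IsNilpotent (adTrunc M X) :=
  ⟨M + 1, adTrunc_pow_eq_zero hX⟩

/-! ### The truncated exponential -/

/-- The exponential `e^{{X,·}}` truncated to degrees `< M`. -/
noncomputable def expTrunc (M : ℕ) (X : Coeffs) : Module.End ℂ Coeffs :=
  IsNilpotent.exp (adTrunc M X)

theorem expTrunc_sub_self_mem_degGE {n : ℕ} {F : Coeffs} (hX : X ∈ degGE 3) (hF : F ∈ degGE n) :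
    expTrunc M X F - F ∈ degGE (n + 1) := by
  let N : Submodule ℚ Coeffs := (degGE (n + 1)).restrictScalars ℚ
  have hN (F : Coeffs) (hF : F ∈ N) : adTrunc M X • F ∈ N :=
    degGE_antitone (Nat.le_succ _) (adTrunc_mem_degGE hX hF)
  exact exp_smul_sub_self_mem (isNilpotent_adTrunc hX) hN (adTrunc_mem_degGE hX hF)

theorem expTrunc_mem_degGE {n : ℕ} {F : Coeffs} (hX : X ∈ degGE 3) (hF : F ∈ degGE n) :
    expTrunc M X F ∈ degGE n :=
  ((degGE n).sub_mem_iff_left hF).1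
    (degGE_antitone (Nat.le_succ n) (expTrunc_sub_self_mem_degGE hX hF))

theorem expTrunc_neg_apply_expTrunc (hX : X ∈ degGE 3) (F : Coeffs) :
    expTrunc M (-X) (expTrunc M X F) = F := by
  rw [expTrunc, expTrunc, map_neg, ← Module.End.mul_apply,
    IsNilpotent.exp_neg_mul_exp_self (isNilpotent_adTrunc hX), Module.End.one_apply]

theorem expTrunc_apply (hX : X ∈ degGE 3) (F : Coeffs) (α β : Idx) :
    expTrunc M X F α β =
      ∑ k ∈ Finset.range (M + 1), (k.factorial : ℂ)⁻¹ * (adTrunc M X ^ k) F α β := by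
  rw [expTrunc, IsNilpotent.exp_eq_sum (adTrunc_pow_eq_zero hX), LinearMap.sum_apply,
    Finset.sum_apply, Finset.sum_apply]
  refine Finset.sum_congr rfl fun k _ => ?_
  simp [Rat.smul_def]

theorem adTrunc_pow_sub_adPow_mem_degGE (hX : X ∈ degGE 3) (F : Coeffs) (k : ℕ) :
    (adTrunc M X ^ k) F - adPow X k F ∈ degGE M := by
  induction k with
  | zero => simp [adPow]
  | succ k ih =>
    have htrunc := truncate_sub_mem_degGE M (bracket X ((adTrunc M X ^ k) F))
    have hbracket : bracket X ((adTrunc M X ^ k) F) - bracket X (adPow X k F) ∈ degGE M := by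
      rw [← poisson_apply, ← poisson_apply, ← map_sub]
      exact degGE_antitone (Nat.le_add_left M 1) (bracket_mem_degGE hX ih)
    rw [pow_succ', Module.End.mul_apply, adTrunc_apply, adPow]
    exact sub_add_sub_cancel _ (bracket X _) _ ▸ add_mem htrunc hbracket

theorem adPow_mem_degGE (hX : X ∈ degGE 3) (F : Coeffs) (k : ℕ) : adPow X k F ∈ degGE k := by
  induction k with
  | zero => exact fun _ _ h => absurd h (Nat.not_lt_zero _)
  | succ k ih =>
    rw [adPow, add_comm k]
    exact bracket_mem_degGE hX ih

theorem expTrunc_sub_expAd_mem_degGE (hX : X ∈ degGE 3) (F : Coeffs) :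
    expTrunc M X F - expAd X F ∈ degGE M := by
  intro α β h
  have hsupp : (Function.support fun k : ℕ => (k.factorial : ℂ)⁻¹ * adPow X k F α β) ⊆
      Finset.range (M + 1) := by
    refine Function.support_subset_iff'.2 fun k hk => ?_
    have hMk : M ≤ k := by
      rw [Finset.mem_coe, Finset.mem_range] at hk
      omega
    rw [adPow_mem_degGE hX F k α β (h.trans_le hMk), mul_zero]
  rw [Pi.sub_apply, Pi.sub_apply, sub_eq_zero, expTrunc_apply hX, expAd,
    finsum_eq_sum_of_support_subset _ hsupp]
  refine Finset.sum_congr rfl fun k _ => ?_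
  rw [sub_eq_zero.1 (adTrunc_pow_sub_adPow_mem_degGE hX F k α β h)]

theorem expTrunc_expTrunc_neg_expAd_sub_mem_degGE {S G : Coeffs} (hS : S ∈ degGE 3)
    (hG : G ∈ degGE 3) (H : Coeffs) :
    expTrunc M G (expTrunc M (-S) (expAd S H)) - expAd G H ∈ degGE M := by
  have hinv : expTrunc M G (expTrunc M (-S) (expAd S H)) - expTrunc M G H ∈ degGE M := by
    rw [← expTrunc_neg_apply_expTrunc (M := M) hS H, ← map_sub, ← map_sub,
      expTrunc_neg_apply_expTrunc hS]
    exact expTrunc_mem_degGE hG (expTrunc_mem_degGE (neg_mem hS)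
      (sub_mem_comm_iff.1 (expTrunc_sub_expAd_mem_degGE hS H)))
  exact sub_add_sub_cancel _ (expTrunc M G H) _ ▸
    add_mem hinv (expTrunc_sub_expAd_mem_degGE hG H)

theorem exists_expTrunc_mul_euler_add {W : Coeffs} (hX : X ∈ degGE 3) (hW : W ∈ degGE 3) :
    ∃ V ∈ degGE 3, expTrunc M X * (euler + adTrunc M W) =
      (euler + adTrunc M V) * expTrunc M X := by
  let I : Submodule ℚ (Module.End ℂ Coeffs) := ((degGE 3).map (adTrunc M)).restrictScalars ℚ
  have commutator_mem (Y : Coeffs) (hY : Y ∈ degGE 3) :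
      adTrunc M X * adTrunc M Y - adTrunc M Y * adTrunc M X ∈ I :=
    adTrunc_commutator hX hY ▸ Submodule.mem_map_of_mem
      (degGE_antitone (by norm_num) (bracket_mem_degGE (m := 1) hX hY))
  have hI (T : Module.End ℂ Coeffs) (hT : T ∈ I) : adTrunc M X * T - T * adTrunc M X ∈ I := by
    obtain ⟨Y, hY, rfl⟩ := hT
    exact commutator_mem Y hY
  have hT : adTrunc M X * (euler + adTrunc M W) - (euler + adTrunc M W) * adTrunc M X ∈ I := by
    rw [mul_add, add_mul, add_sub_add_comm, adTrunc_euler_commutator, ← map_neg]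
    exact add_mem (Submodule.mem_map_of_mem (neg_mem (euler_mem_degGE hX))) (commutator_mem W hW)
  obtain ⟨_, ⟨U, hU, rfl⟩, hexp⟩ := exists_exp_mul_eq_add_mul_exp (isNilpotent_adTrunc hX) hI hT
  exact ⟨W + U, add_mem hW hU, by rw [map_add, ← add_assoc]; exact hexp⟩

/-! ### Conjugations of the Euler operator -/

/-- `Φ` is unipotent for the degree filtration and, modulo degree `≥ M`, conjugates the Euler
operator `E` to `E + {V, ·}`. -/
structure ConjugatesEuler (M : ℕ) (V : Coeffs) (Φ : Module.End ℂ Coeffs) : Prop where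
  mem_degGE : V ∈ degGE 3
  sub_self_mem : ∀ {n : ℕ} {x : Coeffs}, x ∈ degGE n → Φ x - x ∈ degGE (n + 1)
  conj : ∀ x, Φ (euler x) - (euler (Φ x) + bracket V (Φ x)) ∈ degGE M

theorem exists_conjugatesEuler_expTrunc_mul_expTrunc (M : ℕ) (hX : X ∈ degGE 3)
    (hY : Y ∈ degGE 3) : ∃ V, ConjugatesEuler M V (expTrunc M X * expTrunc M Y) := by
  obtain ⟨W, hW, hYW⟩ := exists_expTrunc_mul_euler_add (M := M) hY (degGE 3).zero_mem
  obtain ⟨V, hV, hXV⟩ := exists_expTrunc_mul_euler_add (M := M) hX hW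
  rw [map_zero, add_zero] at hYW
  refine ⟨V, hV, fun {n x} hx => ?_, fun x => ?_⟩
  · rw [Module.End.mul_apply, ← sub_add_sub_cancel _ (expTrunc M Y x)]
    exact add_mem (expTrunc_sub_self_mem_degGE hX (expTrunc_mem_degGE hY hx))
      (expTrunc_sub_self_mem_degGE hY hx)
  · have hconj : expTrunc M X * expTrunc M Y * euler =
        (euler + adTrunc M V) * (expTrunc M X * expTrunc M Y) := by
      rw [mul_assoc, hYW, ← mul_assoc, hXV, mul_assoc]
    rw [← Module.End.mul_apply, hconj, Module.End.mul_apply, LinearMap.add_apply,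
      add_sub_add_left_eq_sub]
    exact truncate_sub_mem_degGE M _

/-- `x` is supported on the pairs of degree exactly `s`. -/
def IsHomogeneous (s : ℕ) (x : Coeffs) : Prop :=
  ∀ α β, wt α + wt β ≠ s → x α β = 0

theorem IsHomogeneous.mem_degGE {s : ℕ} {x : Coeffs} (hx : IsHomogeneous s x) : x ∈ degGE s :=
  fun α β h => hx α β h.ne

theorem IsHomogeneous.euler_eq {s : ℕ} {x : Coeffs} (hx : IsHomogeneous s x) :
    euler x = ((s : ℂ) - 2) • x := by
  ext α β
  by_cases h : wt α + wt β = s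
  · rw [euler_apply, h, Pi.smul_apply, Pi.smul_apply, smul_eq_mul]
  · rw [euler_apply, Pi.smul_apply, Pi.smul_apply, hx α β h, mul_zero, smul_zero]

theorem isHomogeneous_truncate_succ {s : ℕ} {x : Coeffs} (hx : x ∈ degGE s) :
    IsHomogeneous s (truncate (s + 1) x) := by
  intro α β h
  rw [truncate_apply, ite_eq_right_iff]
  exact fun hlt => hx α β (by omega)

theorem truncate_mem_diagonal (M : ℕ) {x : Coeffs} (hx : x ∈ diagonal) :
    truncate M x ∈ diagonal :=
  fun α β h => by rw [truncate_apply, hx α β h, ite_self]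

/-- In degrees `k > s` the operator `E - (s - 2)` is invertible, while `{V, ·}` raises the degree,
so their sum is injective on `degGE (s + 1)`. -/
theorem mem_degGE_of_euler_add_bracket {s K : ℕ} {V y : Coeffs} (hV : V ∈ degGE 3)
    (hy : y ∈ degGE (s + 1))
    (hE : euler y - ((s : ℂ) - 2) • y + bracket V y ∈ degGE K) : y ∈ degGE K := by
  suffices hk : ∀ k ≤ K, y ∈ degGE k from hk K le_rfl
  intro k hk
  induction k with
  | zero => exact fun _ _ h => absurd h (Nat.not_lt_zero _)
  | succ k ih =>
    intro α β h
    rcases lt_or_ge s (wt α + wt β) with hs | hs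
    · have hbracket : bracket V y α β = 0 :=
        bracket_mem_degGE (m := 1) hV (ih (by omega)) α β (by omega)
      have hcoeff : ((wt α + wt β : ℕ) - (s : ℂ)) * y α β = 0 := by
        have hαβ := hE α β (by omega)
        simp only [Pi.add_apply, Pi.sub_apply, Pi.smul_apply, smul_eq_mul, euler_apply, hbracket,
          add_zero] at hαβ
        linear_combination hαβ
      exact (mul_eq_zero.1 hcoeff).resolve_left
        (sub_ne_zero.2 (Nat.cast_injective.ne hs.ne'))
    · exact hy α β (by omega)

namespace ConjugatesEuler

variable {V : Coeffs} {Φ : Module.End ℂ Coeffs} {m s : ℕ} {x : Coeffs}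

theorem displacement_equation (hΦ : ConjugatesEuler M V Φ) (hx : IsHomogeneous s x) :
    euler (Φ x - x) - ((s : ℂ) - 2) • (Φ x - x) + bracket V (Φ x - x) + bracket V x ∈ degGE M := by
  have hbracket : bracket V (Φ x - x) = bracket V (Φ x) - bracket V x := (poisson V).map_sub _ _
  have hconj := neg_mem (hΦ.conj x)
  rw [hx.euler_eq, map_smul] at hconj
  rw [map_sub, hx.euler_eq, hbracket]
  convert hconj using 1
  module

theorem sub_self_mem_of_isHomogeneous (hΦ : ConjugatesEuler M V Φ)
    (hV : DiagonalBelow (m + 2) V) (hx : IsHomogeneous s x) (hdiag : x ∈ diagonal)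
    (hM : m + s ≤ M) : Φ x - x ∈ degGE (m + s) := by
  have hVx := bracket_mem_degGE_of_diagonalBelow hV hdiag hx.mem_degGE
  refine mem_degGE_of_euler_add_bracket hΦ.mem_degGE (hΦ.sub_self_mem hx.mem_degGE) ?_
  exact ((degGE (m + s)).add_mem_iff_left hVx).1
    (degGE_antitone hM (hΦ.displacement_equation hx))

theorem natCast_mul_sub_self_apply (hΦ : ConjugatesEuler M V Φ) (hV : DiagonalBelow (m + 2) V)
    (hx : IsHomogeneous s x) (hdiag : x ∈ diagonal) (hM : m + s < M) {α β : Idx}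
    (hαβ : wt α + wt β = m + s) : (m : ℂ) * (Φ x - x) α β = -bracket V x α β := by
  have hy := hΦ.sub_self_mem_of_isHomogeneous hV hx hdiag hM.le
  have hbracket : bracket V (Φ x - x) α β = 0 :=
    bracket_mem_degGE (m := 1) hΦ.mem_degGE hy α β (by omega)
  have heq := hΦ.displacement_equation hx α β (by omega)
  simp only [Pi.add_apply, Pi.sub_apply _ (_ • _), Pi.smul_apply, smul_eq_mul, euler_apply,
    hbracket, hαβ, Nat.cast_add] at heq
  linear_combination heq

theorem sub_self_mem_of_diagonal (hΦ : ConjugatesEuler M V Φ) (hV : DiagonalBelow (m + 2) V)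
    (hdiag : x ∈ diagonal) (hx : x ∈ degGE s) {K : ℕ} (hKM : K ≤ M) (hK : K ≤ m + s) :
    Φ x - x ∈ degGE K := by
  induction hn : K - s generalizing s x with
  | zero => exact degGE_antitone (by omega) (hΦ.sub_self_mem hx)
  | succ n ih =>
    let x₀ := truncate (s + 1) x
    have hx₀ : IsHomogeneous s x₀ := isHomogeneous_truncate_succ hx
    have hx₀_diag : x₀ ∈ diagonal := truncate_mem_diagonal (s + 1) hdiag
    have hx₀_fixed : Φ x₀ - x₀ ∈ degGE K := by
      obtain ⟨m', rfl⟩ : ∃ m', K = m' + s := ⟨K - s, by omega⟩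
      have hV' : DiagonalBelow (m' + 2) V := fun α β h => hV α β (by omega)
      exact hΦ.sub_self_mem_of_isHomogeneous hV' hx₀ hx₀_diag hKM
    have hrest : Φ (x - x₀) - (x - x₀) ∈ degGE K :=
      ih (sub_mem hdiag hx₀_diag) (sub_mem_comm_iff.1 (truncate_sub_mem_degGE (s + 1) x))
        (by omega) (by omega)
    rw [map_sub, sub_sub_sub_comm] at hrest
    exact ((degGE K).sub_mem_iff_left hx₀_fixed).1 hrest

end ConjugatesEuler

/-! ### Nonresonance -/

theorem Dom_single (ω : ℤ → ℝ) (j : ℤ) : Dom ω (single j 1) (single j 1) = ω j := by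
  rw [Dom, finsum_eq_single _ j]
  · rw [if_pos ⟨rfl, rfl⟩]
  · exact fun k hk => if_neg fun h => hk (Finsupp.single_left_injective one_ne_zero h.1.symm)

theorem exists_eq_single_of_Dom_ne_zero {ω : ℤ → ℝ} {p : Idx × Idx} (h : Dom ω p.1 p.2 ≠ 0) :
    ∃ j, p = (single j 1, single j 1) := by
  by_contra! hne
  exact h (finsum_eq_zero_of_forall_eq_zero fun j => if_neg fun hj => hne j (Prod.ext hj.1 hj.2))

theorem Dom_isHomogeneous (ω : ℤ → ℝ) : IsHomogeneous 2 (Dom ω) := by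
  intro α β h
  by_contra hne
  obtain ⟨j, hj⟩ := exists_eq_single_of_Dom_ne_zero (p := (α, β)) hne
  obtain ⟨rfl, rfl⟩ := Prod.ext_iff.1 hj
  exact h (by rw [wt_single_one])

theorem Dom_mem_diagonal (ω : ℤ → ℝ) : Dom ω ∈ diagonal := by
  intro α β h
  by_contra hne
  obtain ⟨j, hj⟩ := exists_eq_single_of_Dom_ne_zero (p := (α, β)) hne
  exact h ((Prod.ext_iff.1 hj).1.trans (Prod.ext_iff.1 hj).2.symm)

theorem bracket_Dom_apply (ω : ℤ → ℝ) (V : Coeffs) {α β : Idx} (hmom : mom α β = 0) :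
    bracket V (Dom ω) α β =
      Complex.I * (V α β * ∑ j ∈ modes (α, β), (ω j : ℂ) * ((α j : ℂ) - β j)) := by
  classical
  have hsupp : Function.support (bracketTerm V (Dom ω) α β) ⊆
      ((modes (α, β)).image fun j => (j, (α, β), (single j 1, single j 1)) : Finset _) := by
    rintro ⟨j, p, q⟩ hx
    rw [Function.mem_support, bracketTerm_apply, ite_ne_right_iff] at hx
    obtain ⟨⟨-, -, hp⟩, hne⟩ := hx
    obtain ⟨hVD, hc⟩ := mul_ne_zero_iff.1 hne
    obtain ⟨i, rfl⟩ := exists_eq_single_of_Dom_ne_zero (mul_ne_zero_iff.1 hVD).2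
    have hij : i = j := by
      by_contra hij
      simp [contractCoeff, hij] at hc
    subst hij
    obtain rfl : (α, β) = p := by simpa [contract] using hp
    have hi : i ∈ modes (α, β) :=
      by_contra fun hi => hc (contractCoeff_eq_zero_of_notMem_modes hi _)
    exact Finset.mem_coe.2 (Finset.mem_image_of_mem _ hi)
  rw [bracket, finsum_eq_sum_of_support_subset _ hsupp,
    Finset.sum_image fun _ _ _ _ h => congrArg Prod.fst h, Finset.mul_sum, Finset.mul_sum,
    Finset.mul_sum]
  refine Finset.sum_congr rfl fun j _ => ?_
  simp [bracketTerm_apply, contract, contractCoeff, hmom, mom_self, Dom_single, mul_assoc]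

theorem sum_mul_sub_ne_zero_of_nonResonant {ω : ℤ → ℝ} (hω : NonResonant ω) {α β : Idx}
    (h : α ≠ β) :
    ∑ j ∈ modes (α, β), (ω j : ℂ) * ((α j : ℂ) - β j) ≠ 0 := by
  let ℓ : ℤ →₀ ℤ := α.mapRange Nat.cast Nat.cast_zero - β.mapRange Nat.cast Nat.cast_zero
  have hℓ (j : ℤ) : ℓ j = (α j : ℤ) - β j := by
    simp only [ℓ, Finsupp.sub_apply, Finsupp.mapRange_apply]
  have hℓ_ne : ℓ ≠ 0 := by
    refine fun h₀ => h (Finsupp.ext fun j => ?_)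
    have hj := hℓ j
    rw [h₀, Finsupp.zero_apply] at hj
    omega
  have hsupp : ℓ.support ⊆ modes (α, β) := by
    intro j hj
    rw [Finsupp.mem_support_iff, hℓ] at hj
    simp only [modes, Finset.mem_union, Finsupp.mem_support_iff]
    omega
  have hsum : (ℓ.sum fun j c => ω j * (c : ℝ)) = ∑ j ∈ modes (α, β), ω j * ((ℓ j : ℤ) : ℝ) :=
    Finsupp.sum_of_support_subset ℓ hsupp _ fun j _ => by rw [Int.cast_zero, mul_zero]
  have hne := hω ℓ hℓ_ne
  simp only [hsum, hℓ] at hne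
  exact_mod_cast hne

theorem eq_zero_of_bracket_Dom_eq_zero {ω : ℤ → ℝ} (hω : NonResonant ω) {V : Coeffs} {α β : Idx}
    (hmom : mom α β = 0) (hne : α ≠ β) (h : bracket V (Dom ω) α β = 0) : V α β = 0 := by
  rw [bracket_Dom_apply ω V hmom, mul_eq_zero, mul_eq_zero] at h
  exact (h.resolve_left Complex.I_ne_zero).resolve_right
    (sum_mul_sub_ne_zero_of_nonResonant hω hne)

theorem diagonalBelow_of_map_Dom_add {ω : ℤ → ℝ} (hω : NonResonant ω) {V Z Z' : Coeffs}
    {Φ : Module.End ℂ Coeffs} (hΦ : ConjugatesEuler M V Φ) (hZ : Z ∈ diagonal)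
    (hZ3 : Z ∈ degGE 3) (hZ' : Z' ∈ diagonal)
    (hmap : Φ (Dom ω + Z) - (Dom ω + Z') ∈ degGE M) : DiagonalBelow M V := by
  suffices hn : ∀ n ≤ M, DiagonalBelow n V from hn M le_rfl
  intro n hn
  induction n with
  | zero => exact fun α β h => absurd h (Nat.not_lt_zero _)
  | succ n ih =>
    intro α β hlt hmom hne
    rcases lt_or_ge (wt α + wt β) 3 with hlow | hlow
    · exact hΦ.mem_degGE α β hlow
    rcases (Nat.lt_succ_iff.1 hlt).lt_or_eq with hdeg | hdeg
    · exact ih (by omega) α β hdeg hmom hne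
    obtain ⟨m, rfl⟩ : ∃ m, n = m + 2 := ⟨n - 2, by omega⟩
    have hV : DiagonalBelow (m + 2) V := ih (by omega)
    have hΦZ : (Φ Z - Z) α β = 0 :=
      hΦ.sub_self_mem_of_diagonal hV hZ hZ3 hn le_rfl α β hlt
    have hΦD : (Φ (Dom ω) - Dom ω) α β = 0 := by
      have hαβ := hmap α β (by omega)
      simp only [map_add, Pi.sub_apply, Pi.add_apply, Dom_mem_diagonal ω α β hne, hZ α β hne,
        hZ' α β hne] at hαβ hΦZ ⊢
      linear_combination hαβ - hΦZ
    have hbracket := hΦ.natCast_mul_sub_self_apply hV (Dom_isHomogeneous ω) (Dom_mem_diagonal ω)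
      hn hdeg
    rw [hΦD, mul_zero, zero_eq_neg] at hbracket
    exact eq_zero_of_bracket_Dom_eq_zero hω hmom hne hbracket

end Coeffs

/-! ### Approximation of the normal form -/

theorem normal_form_approximation_general {ω : ℤ → ℝ} (hω : NonResonant ω) {d₁ : ℕ}
    {H S G ZH Z' R' : Coeffs} (hS : S ∈ Coeffs.degGE 3) (hG : G ∈ Coeffs.degGE 3)
    (hZH : ZH ∈ Coeffs.diagonal) (hZH3 : ZH ∈ Coeffs.degGE 3) (hZ' : Z' ∈ Coeffs.diagonal)
    (hR' : R' ∈ Coeffs.degGE (d₁ + 2)) (hSH : expAd S H = Dom ω + ZH)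
    (hGH : expAd G H = Dom ω + Z' + R') : Z' - ZH ∈ Coeffs.degGE (d₁ + 2) := by
  obtain ⟨V, hΦ⟩ :=
    Coeffs.exists_conjugatesEuler_expTrunc_mul_expTrunc (d₁ + 2) hG (neg_mem hS)
  set Φ := Coeffs.expTrunc (d₁ + 2) G * Coeffs.expTrunc (d₁ + 2) (-S)
  have hmap : Φ (Dom ω + ZH) - (Dom ω + Z') ∈ Coeffs.degGE (d₁ + 2) := by
    have hexp := Coeffs.expTrunc_expTrunc_neg_expAd_sub_mem_degGE (M := d₁ + 2) hS hG H
    rw [hSH, hGH, sub_add_eq_sub_sub] at hexp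
    exact (Submodule.sub_mem_iff_left _ hR').1 hexp
  have hV : Coeffs.DiagonalBelow (d₁ + 2) V :=
    Coeffs.diagonalBelow_of_map_Dom_add hω hΦ hZH hZH3 hZ' hmap
  have hN : Dom ω + ZH ∈ Coeffs.degGE 2 :=
    add_mem (Coeffs.Dom_isHomogeneous ω).mem_degGE (Coeffs.degGE_antitone (by norm_num) hZH3)
  have hfixed : Φ (Dom ω + ZH) - (Dom ω + ZH) ∈ Coeffs.degGE (d₁ + 2) :=
    hΦ.sub_self_mem_of_diagonal hV (add_mem (Coeffs.Dom_mem_diagonal ω) hZH) hN le_rfl le_rfl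
  convert sub_mem hfixed hmap using 1
  abel

theorem InF.sub {F G : Coeffs} (hF : InF F) (hG : InF G) : InF (F - G) := by
  obtain ⟨hF₀, hF₁, hF₂, hF_real, hF_mom⟩ := hF
  obtain ⟨hG₀, hG₁, hG₂, hG_real, hG_mom⟩ := hG
  refine ⟨by simp [hF₀, hG₀], by simp [hF₁, hG₁], by simp [hF₂, hG₂], fun α β => ?_,
    fun α β hmom => by simp [hF_mom α β hmom, hG_mom α β hmom]⟩
  simp only [Pi.sub_apply, map_sub, hF_real α β, hG_real α β]

/-- if `Z_H` is the Birkhoff normal form of `H = D_ω + Z + R`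
and some `G ∈ 𝓕^{≥1}` conjugates `H` to `D_ω + Z' + R'` with `Z' ∈ 𝓚`,
`R' ∈ 𝓕^{≥d₁}`, then `Z' − Z_H ∈ 𝓚 ∩ 𝓕^{≥d₁}`. -/
theorem normal_form_approximation (ω : ℤ → ℝ) (hω : NonResonant ω)
    (d d₁ : ℕ) (hd : 1 ≤ d) (Z R ZH G Z' R' : Coeffs)
    (hZK : InK Z) (hZ2 : InFge 2 Z) (hR : InFge d R)
    (hZHK : InK ZH) (hZH2 : InFge 2 ZH)
    (hZHnf : ∃ S : Coeffs, InFge 1 S ∧ expAd S (Dom ω + Z + R) = Dom ω + ZH)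
    (hG : InFge 1 G) (hZ'K : InK Z') (hR' : InFge d₁ R')
    (heq : expAd G (Dom ω + Z + R) = Dom ω + Z' + R') :
    InK (Z' - ZH) ∧ InFge d₁ (Z' - ZH) := by
  obtain ⟨S, hS, hSH⟩ := hZHnf
  have hF : InF (Z' - ZH) := hZ'K.1.sub hZHK.1
  exact ⟨⟨hF, Coeffs.diagonal.sub_mem hZ'K.2 hZHK.2⟩, hF,
    normal_form_approximation_general hω hS.2 hG.2 hZHK.2
      (Coeffs.degGE_antitone (Nat.le_succ 3) hZH2.2) hZ'K.2 hR'.2 hSH heq⟩
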